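/- arXiv:1808.01842 — 2 statements merged into one kernel-verified Lean document; each statement's English description precedes it below -/
import Mathlib

section
/- Let k ≥ 1, let f : Finset E → ℝ be non-negative, monotone, submodular, and let O be a finset with |O| ≤ k and f(O) = OPT. Let S₁ ⊆ S be finsets with |S| ≤ k such that: (i) f(S₁) ≥ |S₁| · (2·OPT)/(3k); (ii) f(S) ≥ f(S₁) + |S \ S₁| · (4·OPT)/(9k); (iii) if |S₁| < k then f(o|S₁) ≤ (2·OPT)/(3k) for every o ∈ O; (iv) if |S| < k then f(o|S) ≤ (4·OPT)/(9k) for every o ∈ O. Then f(S) ≥ (5/9)·OPT. (This is the guarantee of the TwoPass algorithm, which in its first pass picks any element with marginal gain at least 2OPT/(3k) and in its second pass any element with marginal gain at least 4OPT/(9k), as long as fewer than k elements are selected; S₁ is the set after the first pass and S the final set.) -/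
/-!
If every element of `O` has marginal gain at most `τ` over `A` and `#O ≤ k`, then adding all of `O`
to `A` gives `f O ≤ f A + k τ`. Hence a pass that ends with fewer than `k` elements loses at most
`k τ` against `f O`.

Let the thresholds be `α f(O) / k` and `β f(O) / k`. A second pass that ends early gives the ratio
`1 - β`. Otherwise, with `x = #S₁ / k`, the first pass guarantees both `α x` and `1 - α`, and the
second adds at least `β (1 - x)`. Weighting the first two bounds by `β / α` and `1 - β / α` cancels
`x` and leaves the ratio `β + (1 - β / α) (1 - α)`. For `α = 2 / 3` and `β = 4 / 9` both ratios
equal `5 / 9`.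
-/

open Finset

/-- The marginal gain `f(e | S)` of an element `e` over a finset `S`; it is `0` when `e ∈ S`. -/
def marginalGain {E M : Type*} [DecidableEq E] [Sub M] (f : Finset E → M) (S : Finset E) (e : E) :
    M :=
  f (insert e S) - f S

/-- Submodularity of a set function, in the form of diminishing marginal gains. -/
def Submodular {E M : Type*} [DecidableEq E] [Sub M] [LE M] (f : Finset E → M) : Prop :=
  ∀ X Y : Finset E, X ⊆ Y → ∀ e ∉ Y, marginalGain f Y e ≤ marginalGain f X e

namespace Submodular

variable {E M : Type*} [DecidableEq E] [AddCommGroup M]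

section PartialOrder

variable [PartialOrder M] [IsOrderedAddMonoid M] {f : Finset E → M} {A O : Finset E} {k : ℕ} {τ : M}

lemma union_le_add_sum_marginalGain (hsub : Submodular f) (A T : Finset E) :
    f (A ∪ T) ≤ f A + ∑ e ∈ T, marginalGain f A e := by
  induction T using Finset.induction_on with
  | empty => simp
  | insert e T he ih =>
    have hgain : marginalGain f (A ∪ T) e ≤ marginalGain f A e := by
      by_cases heA : e ∈ A
      · simp [marginalGain, heA]
      · exact hsub A (A ∪ T) subset_union_left e (by simp [heA, he])
    calc f (A ∪ insert e T)
        = marginalGain f (A ∪ T) e + f (A ∪ T) := by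
          rw [union_insert, marginalGain, sub_add_cancel]
      _ ≤ marginalGain f A e + (f A + ∑ e ∈ T, marginalGain f A e) := add_le_add hgain ih
      _ = f A + ∑ e ∈ insert e T, marginalGain f A e := by
          rw [sum_insert he, add_left_comm]

lemma le_add_nsmul_of_marginalGain_le (hsub : Submodular f) (hmono : Monotone f) (hO : #O ≤ k)
    (hτ : 0 ≤ τ) (hgain : ∀ o ∈ O, marginalGain f A o ≤ τ) :
    f O ≤ f A + k • τ :=
  calc f O ≤ f (A ∪ O) := hmono subset_union_right
    _ ≤ f A + ∑ o ∈ O, marginalGain f A o := hsub.union_le_add_sum_marginalGain A O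
    _ ≤ f A + #O • τ := by grw [sum_le_card_nsmul O _ τ hgain]
    _ ≤ f A + k • τ := by grw [nsmul_le_nsmul_left hτ hO]

end PartialOrder

lemma min_nsmul_le_of_threshold [LinearOrder M] [IsOrderedAddMonoid M] {f : Finset E → M}
    {A O : Finset E} {k : ℕ} {τ : M} (hsub : Submodular f) (hmono : Monotone f) (hO : #O ≤ k)
    (hτ : 0 ≤ τ) (hvalue : #A • τ ≤ f A)
    (hgain : #A < k → ∀ o ∈ O, marginalGain f A o ≤ τ) :
    min (k • τ) (f O - k • τ) ≤ f A := by
  rcases lt_or_ge #A k with hA | hA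
  · exact min_le_of_right_le <| sub_le_iff_le_add.2 <|
      hsub.le_add_nsmul_of_marginalGain_le hmono hO hτ (hgain hA)
  · exact min_le_of_left_le <| (nsmul_le_nsmul_left hτ hA).trans hvalue

end Submodular

theorem stmt_1_general {E 𝕜 : Type*} [DecidableEq E] [Field 𝕜] [LinearOrder 𝕜]
    [IsStrictOrderedRing 𝕜] {f : Finset E → 𝕜} {O S₁ S : Finset E} {k : ℕ} {α β : 𝕜}
    (hsub : Submodular f) (hmono : Monotone f) (hk : 0 < k) (hO : #O ≤ k) (hfO : 0 ≤ f O)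
    (hα : 1 / 2 ≤ α) (hβ : 0 ≤ β) (hβα : β ≤ α)
    (hvalue₁ : #S₁ * (α * (f O / k)) ≤ f S₁)
    (hvalue : f S₁ + #(S \ S₁) * (β * (f O / k)) ≤ f S)
    (hgain₁ : #S₁ < k → ∀ o ∈ O, marginalGain f S₁ o ≤ α * (f O / k))
    (hgain : #S < k → ∀ o ∈ O, marginalGain f S o ≤ β * (f O / k)) :
    min (1 - β) (β + (1 - β / α) * (1 - α)) * f O ≤ f S := by
  have hα₀ : 0 < α := one_half_pos.trans_le hα
  set t := f O / k with ht
  have ht₀ : 0 ≤ t := by positivity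
  have hkt : k * t = f O := by rw [ht]; field_simp
  rcases lt_or_ge #S k with hS | hS
  · have hearly := hsub.le_add_nsmul_of_marginalGain_le hmono hO (mul_nonneg hβ ht₀) (hgain hS)
    rw [nsmul_eq_mul, mul_left_comm, hkt] at hearly
    calc min (1 - β) (β + (1 - β / α) * (1 - α)) * f O
        ≤ (1 - β) * f O := by grw [min_le_left]
      _ ≤ f S := by linarith
  · have hfirst : (1 - α) * f O ≤ f S₁ := by
      have hmin := hsub.min_nsmul_le_of_threshold hmono hO (mul_nonneg hα₀.le ht₀)
        (by rwa [nsmul_eq_mul]) hgain₁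
      rw [nsmul_eq_mul, mul_left_comm, hkt, ← one_sub_mul] at hmin
      rwa [min_eq_right (by gcongr; linarith)] at hmin
    have hcard : (k : 𝕜) ≤ #S₁ + #(S \ S₁) := by
      exact_mod_cast hS.trans (card_le_card_sdiff_add_card.trans_eq (add_comm _ _))
    have hweight : 0 ≤ 1 - β / α := sub_nonneg.2 (div_le_one_of_le₀ hβα hα₀.le)
    calc min (1 - β) (β + (1 - β / α) * (1 - α)) * f O
        ≤ (β + (1 - β / α) * (1 - α)) * f O := by grw [min_le_right]
      _ = β / α * (k * (α * t)) + (1 - β / α) * ((1 - α) * f O) := by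
        rw [← hkt]; field_simp
      _ ≤ β / α * ((#S₁ + #(S \ S₁)) * (α * t)) + (1 - β / α) * f S₁ := by gcongr
      _ = β / α * (#S₁ * (α * t)) + (1 - β / α) * f S₁ + #(S \ S₁) * (β * t) := by
        field_simp; ring
      _ ≤ β / α * f S₁ + (1 - β / α) * f S₁ + #(S \ S₁) * (β * t) := by gcongr
      _ = f S₁ + #(S \ S₁) * (β * t) := by ring
      _ ≤ f S := hvalue

/-- Guarantee of the TwoPass algorithm: under the invariants (i)–(iv),
the final set satisfies `f S ≥ (5/9)·OPT`. -/
theorem stmt_1 {E : Type*} [DecidableEq E]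
    (k : ℕ) (hk : 1 ≤ k)
    (f : Finset E → ℝ)
    (hnonneg : ∀ X : Finset E, 0 ≤ f X)
    (hmono : ∀ X Y : Finset E, X ⊆ Y → f X ≤ f Y)
    (hsubmod : ∀ X Y : Finset E, X ⊆ Y → ∀ e ∉ Y,
      f (insert e Y) - f Y ≤ f (insert e X) - f X)
    (O : Finset E) (OPT : ℝ) (hOcard : O.card ≤ k) (hOPT : f O = OPT)
    (S₁ S : Finset E) (hS₁S : S₁ ⊆ S) (hScard : S.card ≤ k)
    (h1 : f S₁ ≥ (S₁.card : ℝ) * ((2 * OPT) / (3 * k)))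
    (h2 : f S ≥ f S₁ + ((S \ S₁).card : ℝ) * ((4 * OPT) / (9 * k)))
    (h3 : S₁.card < k → ∀ o ∈ O, f (insert o S₁) - f S₁ ≤ (2 * OPT) / (3 * k))
    (h4 : S.card < k → ∀ o ∈ O, f (insert o S) - f S ≤ (4 * OPT) / (9 * k)) :
    f S ≥ (5 / 9) * OPT := by
  subst hOPT
  simp only [mul_div_mul_comm] at h1 h2 h3 h4
  have hratio := stmt_1_general hsubmod hmono hk hOcard (hnonneg O) (by norm_num) (by norm_num)
    (by norm_num) h1 h2 h3 h4
  norm_num at hratio ⊢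
  exact hratio
end

section
/- Let p ≥ 1 and k ≥ 1 be integers, let f : Finset E → ℝ be non-negative, monotone, submodular, and let O be a finset with |O| ≤ k and f(O) = OPT. Let ∅ = S₀ ⊆ S₁ ⊆ ⋯ ⊆ S_p be finsets with |S_p| ≤ k such that for every 1 ≤ j ≤ p: (i) f(S_j) ≥ f(S_{j−1}) + (|S_j| − |S_{j−1}|) · (p/(p+1))^j · OPT/k; and (ii) if |S_j| < k then f(o|S_j) ≤ (p/(p+1))^j · OPT/k for every o ∈ O. Then f(S_p) ≥ (1 − (p/(p+1))^p) · OPT. (This is the guarantee of the p-pass algorithm, whose i-th pass over the stream adds any element with marginal gain at least (p/(p+1))^i·OPT/k while fewer than k elements are selected.) -/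
open Finset

/-!
Normalise the number of selected elements by `k`, say `a j = #(S j) / k`, and compare it with a
*pace* `c j ≤ 1` such that the threshold drops by `r j - r (j + 1) ≤ (c (j + 1) - c j) * r (j + 1)`.
The invariant is `(1 - r j + (a j - c j) * r j) * f O ≤ f (S j)`: every element selected beyond the
pace is worth the current threshold. If pass `j` is at or ahead of the pace, lowering the threshold
only devalues the surplus. If it is behind, then `a j < 1`, so all gains are below the threshold and
submodularity gives `(1 - r j) * f O ≤ f (S j)` outright, which restarts the induction.
For the thresholds `(p / (p + 1)) ^ j` the pace is `j / p`.
-/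

/-- Submodularity of a set function in its diminishing-returns form: the marginal gain of an element
does not increase when the set it is added to grows. -/
def IsSubmodular {E M : Type*} [DecidableEq E] [Sub M] [LE M] (f : Finset E → M) : Prop :=
  ∀ X Y : Finset E, X ⊆ Y → ∀ e ∉ Y, f (insert e Y) - f Y ≤ f (insert e X) - f X

namespace IsSubmodular

variable {E M : Type*} [DecidableEq E] [AddCommGroup M] [PartialOrder M] [IsOrderedAddMonoid M]
  {f : Finset E → M}

theorem union_le_add_sum_gain (hf : IsSubmodular f) (A T : Finset E) :
    f (A ∪ T) ≤ f A + ∑ e ∈ T, (f (insert e A) - f A) := by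
  induction T using Finset.induction_on with
  | empty => simp
  | insert e T heT ih =>
    rw [union_insert, sum_insert heT]
    by_cases heA : e ∈ A
    · rwa [insert_eq_of_mem (mem_union_left T heA), insert_eq_of_mem heA, sub_self, zero_add]
    · have hgain := hf A (A ∪ T) subset_union_left e (by simp [heA, heT])
      calc f (insert e (A ∪ T))
          = (f (insert e (A ∪ T)) - f (A ∪ T)) + f (A ∪ T) := (sub_add_cancel _ _).symm
        _ ≤ (f (insert e A) - f A) + (f A + ∑ x ∈ T, (f (insert x A) - f A)) :=
          add_le_add hgain ih
        _ = f A + ((f (insert e A) - f A) + ∑ x ∈ T, (f (insert x A) - f A)) :=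
          add_left_comm _ _ _

theorem le_add_nsmul_of_gain_le (hf : IsSubmodular f) (hmono : Monotone f) {A O : Finset E} {k : ℕ}
    {t : M} (hO : #O ≤ k) (ht : 0 ≤ t) (hgain : ∀ o ∈ O, f (insert o A) - f A ≤ t) :
    f O ≤ f A + k • t :=
  calc f O ≤ f (A ∪ O) := hmono subset_union_right
    _ ≤ f A + ∑ o ∈ O, (f (insert o A) - f A) := hf.union_le_add_sum_gain A O
    _ ≤ f A + #O • t := by grw [sum_le_card_nsmul O _ t hgain]
    _ ≤ f A + k • t := by grw [hO]

end IsSubmodular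

section Pace

variable {R : Type*} [CommRing R] [LinearOrder R] [IsStrictOrderedRing R]

/-- A threshold schedule `r` for `p` passes together with a pace `c`, where `c j` is the fraction of
the cardinality budget that a run on pace has used after `j` passes. By `drop_le`, what such a run
collects in pass `j + 1`, valued at the threshold `r (j + 1)`, covers the growth of the guarantee
from `1 - r j` to `1 - r (j + 1)`. -/
structure IsPacedThreshold (r c : ℕ → R) (p : ℕ) : Prop where
  threshold_zero : r 0 = 1
  threshold_nonneg : ∀ j ≤ p, 0 ≤ r j
  threshold_succ_le : ∀ j < p, r (j + 1) ≤ r j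
  pace_zero : c 0 = 0
  pace_le_one : ∀ j ≤ p, c j ≤ 1
  drop_le : ∀ j < p, r j - r (j + 1) ≤ (c (j + 1) - c j) * r (j + 1)

theorem pace_invariant_step {T s t a b c d v w : R} (hT : 0 ≤ T) (ht : 0 ≤ t) (hts : t ≤ s)
    (hdrop : s - t ≤ (d - c) * t) (hgain : v + (b - a) * (t * T) ≤ w)
    (hbehind : a < c → (1 - s) * T ≤ v) (hv : (1 - s + (a - c) * s) * T ≤ v) :
    (1 - t + (b - d) * t) * T ≤ w := by
  have hpace : (s - t) * T ≤ (d - c) * t * T := mul_le_mul_of_nonneg_right hdrop hT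
  suffices hrestart : (1 - s + (a - c) * t) * T ≤ v by
    linear_combination hgain + hrestart + hpace
  rcases le_or_gt c a with hca | hac
  · have hsurplus : (a - c) * t * T ≤ (a - c) * s * T :=
      mul_le_mul_of_nonneg_right (mul_le_mul_of_nonneg_left hts (sub_nonneg.2 hca)) hT
    linear_combination hv + hsurplus
  · have hdeficit : 0 ≤ (c - a) * t * T :=
      mul_nonneg (mul_nonneg (sub_nonneg.2 hac.le) ht) hT
    linear_combination hbehind hac + hdeficit

namespace IsPacedThreshold

variable {T : R} {r c a v : ℕ → R} {p : ℕ}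

theorem pace_invariant (hr : IsPacedThreshold r c p) (hT : 0 ≤ T) (ha0 : a 0 = 0)
    (hgain : ∀ j < p, v j + (a (j + 1) - a j) * (r (j + 1) * T) ≤ v (j + 1))
    (hbelow : ∀ j ≤ p, a j < 1 → (1 - r j) * T ≤ v j) :
    ∀ j ≤ p, (1 - r j + (a j - c j) * r j) * T ≤ v j
  | 0, hp => by
    simpa only [ha0, hr.pace_zero, sub_self, zero_mul, add_zero] using
      hbelow 0 hp (ha0 ▸ zero_lt_one)
  | j + 1, hj =>
    pace_invariant_step hT (hr.threshold_nonneg (j + 1) hj) (hr.threshold_succ_le j hj)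
      (hr.drop_le j hj) (hgain j hj)
      (fun hac ↦ hbelow j (by lia) (hac.trans_le (hr.pace_le_one j (by lia))))
      (hr.pace_invariant hT ha0 hgain hbelow j (by lia))

theorem one_sub_mul_le (hr : IsPacedThreshold r c p) (hT : 0 ≤ T) (ha0 : a 0 = 0)
    (hgain : ∀ j < p, v j + (a (j + 1) - a j) * (r (j + 1) * T) ≤ v (j + 1))
    (hbelow : ∀ j ≤ p, a j < 1 → (1 - r j) * T ≤ v j) :
    (1 - r p) * T ≤ v p := by
  rcases lt_or_ge (a p) 1 with hlt | hge
  · exact hbelow p le_rfl hlt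
  · have hsurplus : 0 ≤ (a p - c p) * r p * T :=
      mul_nonneg (mul_nonneg (sub_nonneg.2 ((hr.pace_le_one p le_rfl).trans hge))
        (hr.threshold_nonneg p le_rfl)) hT
    linear_combination hr.pace_invariant hT ha0 hgain hbelow p le_rfl + hsurplus

end IsPacedThreshold

end Pace

section Passes

variable {E 𝕜 : Type*} [Field 𝕜] [LinearOrder 𝕜] [IsStrictOrderedRing 𝕜]

variable (𝕜) in
theorem isPacedThreshold_geometric (p : ℕ) :
    IsPacedThreshold (fun j ↦ ((p : 𝕜) / (p + 1)) ^ j) (fun j ↦ (j : 𝕜) / p) p := by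
  have hq0 : 0 ≤ (p : 𝕜) / (p + 1) := by positivity
  have hq1 : (p : 𝕜) / (p + 1) ≤ 1 := div_le_one_of_le₀ (by linarith) (by positivity)
  have hdrop : ∀ j < p, ((p : 𝕜) / (p + 1)) ^ j - ((p : 𝕜) / (p + 1)) ^ (j + 1) =
      (((j + 1 : ℕ) : 𝕜) / p - (j : 𝕜) / p) * ((p : 𝕜) / (p + 1)) ^ (j + 1) := fun j hj ↦ by
    have hp : (p : 𝕜) ≠ 0 := Nat.cast_ne_zero.2 (by lia)
    rw [pow_succ]
    push_cast
    field_simp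
    ring
  exact {
    threshold_zero := pow_zero _
    threshold_nonneg := fun j _ ↦ pow_nonneg hq0 j
    threshold_succ_le := fun j _ ↦ pow_le_pow_of_le_one hq0 hq1 j.le_succ
    pace_zero := by simp
    pace_le_one := fun j hj ↦ div_le_one_of_le₀ (Nat.cast_le.2 hj) p.cast_nonneg
    drop_le := fun j hj ↦ (hdrop j hj).le }

variable [DecidableEq E] {f : Finset E → 𝕜} {O : Finset E} {k : ℕ}

theorem IsSubmodular.one_sub_mul_le_of_gain_le (hf : IsSubmodular f) (hmono : Monotone f)
    {A : Finset E} {r : 𝕜} (hk : 0 < k) (hO : #O ≤ k) (hO0 : 0 ≤ f O) (hr : 0 ≤ r)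
    (hgain : ∀ o ∈ O, f (insert o A) - f A ≤ r * f O / k) :
    (1 - r) * f O ≤ f A := by
  have hle := hf.le_add_nsmul_of_gain_le hmono hO (by positivity) hgain
  rw [nsmul_eq_mul, mul_div_cancel₀ _ (Nat.cast_ne_zero.2 hk.ne')] at hle
  linear_combination hle

theorem stmt_2_general {S : ℕ → Finset E} {p : ℕ} {r c : ℕ → 𝕜} (hr : IsPacedThreshold r c p)
    (hf : IsSubmodular f) (hmono : Monotone f) (hf0 : 0 ≤ f ∅) (hk : 0 < k) (hO : #O ≤ k)
    (hS0 : S 0 = ∅)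
    (hgain : ∀ j < p,
      f (S j) + ((#(S (j + 1)) : 𝕜) - #(S j)) * (r (j + 1) * f O / k) ≤ f (S (j + 1)))
    (hgain_le : ∀ j < p, #(S (j + 1)) < k →
      ∀ o ∈ O, f (insert o (S (j + 1))) - f (S (j + 1)) ≤ r (j + 1) * f O / k) :
    (1 - r p) * f O ≤ f (S p) := by
  have hk' : (0 : 𝕜) < k := Nat.cast_pos.2 hk
  have hO0 : 0 ≤ f O := hf0.trans (hmono (empty_subset O))
  have hgain_fraction : ∀ j < p, f (S j) +
      ((#(S (j + 1)) : 𝕜) / k - #(S j) / k) * (r (j + 1) * f O) ≤ f (S (j + 1)) := fun j hj ↦ by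
    linear_combination hgain j hj
  have hbelow : ∀ j ≤ p, (#(S j) : 𝕜) / k < 1 → (1 - r j) * f O ≤ f (S j)
    | 0, _, _ => by simpa only [hr.threshold_zero, sub_self, zero_mul, hS0] using hf0
    | j + 1, hj, hlt => hf.one_sub_mul_le_of_gain_le hmono hk hO hO0
        (hr.threshold_nonneg (j + 1) hj) (hgain_le j hj (Nat.cast_lt.1 ((div_lt_one hk').1 hlt)))
  exact hr.one_sub_mul_le (a := fun j ↦ (#(S j) : 𝕜) / k) (v := fun j ↦ f (S j)) hO0
    (by simp [hS0]) hgain_fraction hbelow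

end Passes

/-- Guarantee of the p-pass algorithm: `f (S p) ≥ (1 − (p/(p+1))^p)·OPT`. -/
theorem stmt_2 {E : Type*} [DecidableEq E]
    (p k : ℕ) (hp : 1 ≤ p) (hk : 1 ≤ k)
    (f : Finset E → ℝ)
    (hnonneg : ∀ X : Finset E, 0 ≤ f X)
    (hmono : ∀ X Y : Finset E, X ⊆ Y → f X ≤ f Y)
    (hsubmod : ∀ X Y : Finset E, X ⊆ Y → ∀ e ∉ Y,
      f (insert e Y) - f Y ≤ f (insert e X) - f X)
    (O : Finset E) (OPT : ℝ) (hOcard : O.card ≤ k) (hOPT : f O = OPT)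
    (S : ℕ → Finset E) (hS0 : S 0 = ∅)
    (hchain : ∀ j, 1 ≤ j → j ≤ p → S (j - 1) ⊆ S j)
    (hcard : (S p).card ≤ k)
    (h1 : ∀ j, 1 ≤ j → j ≤ p →
      f (S j) ≥ f (S (j - 1)) +
        (((S j).card : ℝ) - ((S (j - 1)).card : ℝ)) *
          (((p : ℝ) / (p + 1)) ^ j * OPT / k))
    (h2 : ∀ j, 1 ≤ j → j ≤ p → (S j).card < k →
      ∀ o ∈ O, f (insert o (S j)) - f (S j) ≤ ((p : ℝ) / (p + 1)) ^ j * OPT / k) :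
    f (S p) ≥ (1 - ((p : ℝ) / (p + 1)) ^ p) * OPT := by
  subst hOPT
  exact stmt_2_general (isPacedThreshold_geometric ℝ p) hsubmod (fun X Y ↦ hmono X Y) (hnonneg ∅)
    hk hOcard hS0 (fun j ↦ h1 (j + 1) j.succ_pos) (fun j ↦ h2 (j + 1) j.succ_pos)
end
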